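/- arXiv:1309.4656 — 7 statements merged into one kernel-verified Lean document; each statement's English description precedes it below -/
import Mathlib

section
/- (Lemma 1, point-alternative case.) Let x₁,…,xₙ be i.i.d. from the one-parameter exponential family f(x|θ) = h(x) exp[η(θ)T(x) − A(θ)] with η strictly increasing, fix θ₀ and γ > 0, and suppose θ* > θ₀ minimizes g_γ(θ,θ₀) over all θ > θ₀. Then for every data-generating parameter θ_t and every point alternative θ₁ > θ₀, P_{θ_t}[BF_{*0}(x) > γ] ≥ P_{θ_t}[BF₁₀(x) > γ], where BF_{*0} and BF₁₀ denote the Bayes factors of the point alternatives θ* and θ₁ against θ₀, and P_{θ_t} denotes probability under i.i.d. sampling from f(·|θ_t). -/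
open MeasureTheory

/-- Lemma 1, point-alternative case: in the one-parameter exponential
family `f(x|θ) = h(x) exp[η(θ)T(x) − A(θ)]` with `η` strictly increasing, if
`θ* > θ₀` minimizes `g_γ(θ,θ₀) = (log γ + n[A(θ) − A(θ₀)])/(η(θ) − η(θ₀))` over
`θ > θ₀`, then for every data-generating parameter `θ_t` and every point alternative
`θ₁ > θ₀`, `P_{θ_t}[BF_{*0} > γ] ≥ P_{θ_t}[BF₁₀ > γ]`, where `P_{θ_t}` is the
i.i.d. (product) law of `n` observations drawn from `f(·|θ_t)`. -/
theorem stmt_1 {X : Type*} [MeasurableSpace X] (μ : Measure X) (n : ℕ)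
    (h T : X → ℝ) (η A : ℝ → ℝ)
    (hη : StrictMono η) (hpos : ∀ x, 0 < h x)
    (hT : Measurable T) (hh : Measurable h)
    (f : X → ℝ → ℝ)
    (hf : ∀ x θ, f x θ = h x * Real.exp (η θ * T x - A θ))
    (hprob : ∀ θ : ℝ,
      IsProbabilityMeasure (μ.withDensity fun x => ENNReal.ofReal (f x θ)))
    (θ₀ θStar : ℝ) (γ : ℝ) (hγ : 0 < γ)
    (hθStar : θ₀ < θStar)
    (hmin : ∀ θ, θ₀ < θ →
      (Real.log γ + n * (A θStar - A θ₀)) / (η θStar - η θ₀) ≤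
        (Real.log γ + n * (A θ - A θ₀)) / (η θ - η θ₀))
    (θ₁ : ℝ) (hθ₁ : θ₀ < θ₁) (θt : ℝ) :
    (Measure.pi fun _ : Fin n => μ.withDensity fun x => ENNReal.ofReal (f x θt))
        {x | γ < ∏ i, f (x i) θ₁ / f (x i) θ₀} ≤
      (Measure.pi fun _ : Fin n => μ.withDensity fun x => ENNReal.ofReal (f x θt))
        {x | γ < ∏ i, f (x i) θStar / f (x i) θ₀} := by
  have key : ∀ θ, θ₀ < θ → ∀ x : Fin n → X, (γ < ∏ i, f (x i) θ / f (x i) θ₀) ↔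
      (Real.log γ + n * (A θ - A θ₀)) / (η θ - η θ₀) < ∑ i, T (x i) := by
    intro θ hθ x
    have hd : 0 < η θ - η θ₀ := sub_pos.mpr (hη hθ)
    have hr : ∀ y, f y θ / f y θ₀ = Real.exp ((η θ - η θ₀) * T y - (A θ - A θ₀)) := by
      intro y
      rw [hf, hf, mul_div_mul_left _ _ (hpos y).ne', ← Real.exp_sub]
      congr 1
      ring
    simp only [hr]
    rw [← Real.exp_sum, ← Real.log_lt_iff_lt_exp hγ, div_lt_iff₀ hd, Finset.sum_sub_distrib,
      ← Finset.mul_sum]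
    simp only [Finset.sum_const, Finset.card_univ, Fintype.card_fin, nsmul_eq_mul]
    constructor <;> intro hlt <;> linarith
  apply measure_mono
  intro x hx
  simp only [Set.mem_setOf_eq] at hx ⊢
  rw [key θ₁ hθ₁] at hx
  rw [key θStar hθStar]
  exact (hmin θ₁ hθ₁).trans_lt hx
end

section
/- (Lemma 1, composite-alternative case.) Let x₁,…,xₙ be i.i.d. from the one-parameter exponential family f(x|θ) = h(x) exp[η(θ)T(x) − A(θ)] with η strictly increasing, fix θ₀ and γ > 0, and suppose θ* > θ₀ minimizes g_γ(θ,θ₀) over θ > θ₀. Let π be any probability measure supported on {θ : θ > θ₀}, and define the composite Bayes factor BF_{π0}(x) = ∫ ∏ᵢ [f(xᵢ|θ)/f(xᵢ|θ₀)] π(dθ). Then for every data point x, BF_{π0}(x) > γ implies BF_{*0}(x) > γ (where BF_{*0} is the Bayes factor of the point alternative θ*), and consequently for every data-generating parameter θ_t, P_{θ_t}[BF_{π0}(x) > γ] ≤ P_{θ_t}[BF_{*0}(x) > γ]. Hence the point mass at θ* defines a uniformly most powerful Bayesian test UMPBT(γ) among alternatives supported on {θ > θ₀}. -/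
open MeasureTheory

/-- Lemma 1, composite-alternative case: in the one-parameter
exponential family `f(x|θ) = h(x) exp[η(θ)T(x) − A(θ)]` with `η` strictly
increasing, if `θ* > θ₀` minimizes `g_γ(θ,θ₀)` over `θ > θ₀` and `π` is any prior
(probability measure) supported on `{θ : θ > θ₀}`, then for every data point `x`,
`BF_{π0}(x) > γ` implies `BF_{*0}(x) > γ`; consequently, for every data-generating
parameter `θ_t`, `P_{θ_t}[BF_{π0} > γ] ≤ P_{θ_t}[BF_{*0} > γ]`.  Hence the point
mass at `θ*` defines a UMPBT(γ) among alternatives supported on `{θ > θ₀}`. -/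
theorem stmt_2 {X : Type*} [MeasurableSpace X] (μ : Measure X) (n : ℕ)
    (h T : X → ℝ) (η A : ℝ → ℝ)
    (hη : StrictMono η) (hpos : ∀ x, 0 < h x)
    (hT : Measurable T) (hh : Measurable h)
    (f : X → ℝ → ℝ)
    (hf : ∀ x θ, f x θ = h x * Real.exp (η θ * T x - A θ))
    (hprob : ∀ θ : ℝ,
      IsProbabilityMeasure (μ.withDensity fun x => ENNReal.ofReal (f x θ)))
    (θ₀ θStar : ℝ) (γ : ℝ) (hγ : 0 < γ)
    (hθStar : θ₀ < θStar)
    (hmin : ∀ θ, θ₀ < θ →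
      (Real.log γ + n * (A θStar - A θ₀)) / (η θStar - η θ₀) ≤
        (Real.log γ + n * (A θ - A θ₀)) / (η θ - η θ₀))
    (π : Measure ℝ) [IsProbabilityMeasure π]
    (hπ : π {θ | θ ≤ θ₀} = 0) :
    (∀ x : Fin n → X,
      γ < ∫ θ, (∏ i, f (x i) θ / f (x i) θ₀) ∂π →
        γ < ∏ i, f (x i) θStar / f (x i) θ₀) ∧
    (∀ θt : ℝ,
      (Measure.pi fun _ : Fin n => μ.withDensity fun x => ENNReal.ofReal (f x θt))
          {x | γ < ∫ θ, (∏ i, f (x i) θ / f (x i) θ₀) ∂π} ≤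
        (Measure.pi fun _ : Fin n => μ.withDensity fun x => ENNReal.ofReal (f x θt))
          {x | γ < ∏ i, f (x i) θStar / f (x i) θ₀}) := by
  have key : ∀ x : Fin n → X,
      γ < ∫ θ, (∏ i, f (x i) θ / f (x i) θ₀) ∂π →
        γ < ∏ i, f (x i) θStar / f (x i) θ₀ := by
    intro x hx
    have hprod : ∀ θ, (∏ i, f (x i) θ / f (x i) θ₀) =
        Real.exp ((η θ - η θ₀) * (∑ i, T (x i)) - n * (A θ - A θ₀)) := by
      intro θ
      have h1 : ∀ i, f (x i) θ / f (x i) θ₀ =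
          Real.exp ((η θ - η θ₀) * T (x i) - (A θ - A θ₀)) := by
        intro i
        rw [hf, hf, mul_div_mul_left _ _ (hpos (x i)).ne', ← Real.exp_sub]
        congr 1
        ring
      rw [Finset.prod_congr rfl (fun i _ => h1 i), ← Real.exp_sum]
      congr 1
      rw [Finset.sum_sub_distrib, ← Finset.mul_sum]
      simp
      ring
    have hiff : ∀ θ, θ₀ < θ → (γ < (∏ i, f (x i) θ / f (x i) θ₀) ↔
        (Real.log γ + n * (A θ - A θ₀)) / (η θ - η θ₀) < ∑ i, T (x i)) := by
      intro θ hθ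
      have hd : 0 < η θ - η θ₀ := sub_pos.2 (hη hθ)
      rw [hprod, ← Real.log_lt_iff_lt_exp hγ, div_lt_iff₀ hd]
      constructor <;> intro H <;> linarith
    by_contra hcon
    refine absurd hx (not_lt.2 ?_)
    have hae : ∀ᵐ θ ∂π, (∏ i, f (x i) θ / f (x i) θ₀) ≤ γ := by
      have h0 : ∀ᵐ θ ∂π, ¬ θ ≤ θ₀ := by
        rw [ae_iff]
        simpa using hπ
      filter_upwards [h0] with θ hθ
      by_contra hlt
      have hθ' := not_le.1 hθ
      exact hcon ((hiff θStar hθStar).2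
        ((hmin θ hθ').trans_lt ((hiff θ hθ').1 (not_le.1 hlt))))
    have hnn : ∀ᵐ θ ∂π, 0 ≤ (∏ i, f (x i) θ / f (x i) θ₀) := by
      refine Filter.Eventually.of_forall fun θ => ?_
      rw [hprod]
      exact (Real.exp_pos _).le
    calc ∫ θ, (∏ i, f (x i) θ / f (x i) θ₀) ∂π ≤ ∫ _, γ ∂π :=
          integral_mono_of_nonneg hnn (integrable_const γ) hae
      _ = γ := by simp
  exact ⟨key, fun θt => measure_mono fun x hx => key x hx⟩
end

section
/- (Lemma 2, statement 1.) Let g_γ(θ,θ₀) = (log γ + n[A(θ) − A(θ₀)])/(θ − θ₀) for θ ≠ θ₀, where γ > 1, n ≥ 1, and A is twice continuously differentiable on an interval containing [θ₀, θ*]. Suppose θ* > θ₀ is a stationary point of g_γ(·,θ₀), i.e., (d/dθ) g_γ(θ,θ₀) = 0 at θ = θ*. Then there exists t ∈ (θ₀, θ*) such that log γ = (n/2) A''(t) (θ* − θ₀)²; in particular, if A''(t) > 0, then |θ* − θ₀| = √(2 log γ / (n A''(t))). -/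
/-- Lemma 2, statement 1: let
`g_γ(θ,θ₀) = (log γ + n[A(θ) − A(θ₀)])/(θ − θ₀)` with `γ > 1`, `n ≥ 1`, and `A`
twice continuously differentiable on an (open) interval containing `[θ₀, θ*]`.
If `θ* > θ₀` is a stationary point of `g_γ(·,θ₀)`, then there exists
`t ∈ (θ₀, θ*)` with `log γ = (n/2) A''(t) (θ* − θ₀)²`; in particular, if
`A''(t) > 0` then `|θ* − θ₀| = √(2 log γ / (n A''(t)))`. -/
theorem stmt_4 (A : ℝ → ℝ) (θ₀ θStar : ℝ) (hlt : θ₀ < θStar)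
    (s : Set ℝ) (hs : IsOpen s) (hsub : Set.Icc θ₀ θStar ⊆ s)
    (hA : ContDiffOn ℝ 2 A s)
    (γ : ℝ) (hγ : 1 < γ) (n : ℕ) (hn : 1 ≤ n)
    (hstat :
      deriv (fun θ => (Real.log γ + n * (A θ - A θ₀)) / (θ - θ₀)) θStar = 0) :
    ∃ t ∈ Set.Ioo θ₀ θStar,
      Real.log γ = (n / 2 : ℝ) * deriv (deriv A) t * (θStar - θ₀) ^ 2 ∧
      (0 < deriv (deriv A) t →
        |θStar - θ₀| = Real.sqrt (2 * Real.log γ / (n * deriv (deriv A) t))) := by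
  have hd : 0 < θStar - θ₀ := sub_pos.mpr hlt
  have h1 : ∀ x ∈ s, HasDerivAt A (deriv A x) x := fun x hx =>
    ((hA.differentiableOn (by norm_num)).differentiableAt (hs.mem_nhds hx)).hasDerivAt
  have hA' : ContDiffOn ℝ 1 (deriv A) s :=
    ((contDiffOn_succ_iff_deriv_of_isOpen (n := 1) hs).1 (by simpa [one_add_one_eq_two] using hA)).2.2
  have h2 : ∀ x ∈ s, HasDerivAt (deriv A) (deriv (deriv A) x) x := fun x hx =>
    ((hA'.differentiableOn (by norm_num)).differentiableAt (hs.mem_nhds hx)).hasDerivAt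
  have hG : ∀ x ∈ s, HasDerivAt (fun x => (x - θ₀) * deriv A x - A x)
      ((x - θ₀) * deriv (deriv A) x) x := fun x hx => by
    have := ((((hasDerivAt_id x).sub_const θ₀).mul (h2 x hx)).sub (h1 x hx))
    refine HasDerivAt.congr_deriv this ?_
    simp
  have hQ : ∀ x, HasDerivAt (fun x : ℝ => (x - θ₀) ^ 2) (2 * (x - θ₀)) x := fun x => by
    have := ((hasDerivAt_id x).sub_const θ₀).pow 2
    refine HasDerivAt.congr_deriv this ?_
    simp
  obtain ⟨t, ht, he⟩ := exists_ratio_hasDerivAt_eq_ratio_slope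
    (fun x => (x - θ₀) * deriv A x - A x) (fun x => (x - θ₀) * deriv (deriv A) x) hlt
    (fun x hx => (hG x (hsub hx)).continuousAt.continuousWithinAt)
    (fun x hx => hG x (hsub (Set.Ioo_subset_Icc_self hx)))
    (fun x : ℝ => (x - θ₀) ^ 2) (fun x => 2 * (x - θ₀))
    (fun x _ => (hQ x).continuousAt.continuousWithinAt)
    (fun x _ => hQ x)
  have hst : (n : ℝ) * deriv A θStar * (θStar - θ₀)
      - (Real.log γ + n * (A θStar - A θ₀)) = 0 := by
    have h := (((((h1 θStar (hsub ⟨hlt.le, le_rfl⟩)).sub_const (A θ₀)).const_mul (n : ℝ)).const_add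
      (Real.log γ)).fun_div ((hasDerivAt_id θStar).sub_const θ₀) hd.ne').deriv
    simp only [id] at h
    rw [hstat] at h
    have h' := (div_eq_zero_iff.1 h.symm).resolve_right (pow_ne_zero 2 hd.ne')
    linarith
  have ht0 : t - θ₀ ≠ 0 := (sub_pos.mpr ht.1).ne'
  have key : Real.log γ = (n / 2 : ℝ) * deriv (deriv A) t * (θStar - θ₀) ^ 2 := by
    have e : (θStar - θ₀) ^ 2 * deriv (deriv A) t
        = 2 * ((θStar - θ₀) * deriv A θStar - A θStar + A θ₀) := by
      apply mul_left_cancel₀ ht0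
      linear_combination he
    linear_combination -hst - (n / 2 : ℝ) * e
  refine ⟨t, ht, key, fun hp => ?_⟩
  have hn0 : (n : ℝ) ≠ 0 := by positivity
  have : 2 * Real.log γ / (n * deriv (deriv A) t) = (θStar - θ₀) ^ 2 := by
    rw [key]
    field_simp
  rw [this, Real.sqrt_sq_eq_abs]
end

section
/- Fix μ₀ ∈ ℝ, σ > 0, n ≥ 1, and γ > 1. The function h(μ₁) = σ² log(γ)/(n(μ₁ − μ₀)) + (μ₀ + μ₁)/2, defined for μ₁ > μ₀, attains its unique minimum at μ₁* = μ₀ + σ√(2 log γ / n), and the minimum value is h(μ₁*) = μ₀ + σ√(2 log γ / n) = μ₁*. Consequently, among all point alternatives μ₁ > μ₀ for the test of a normal mean with known variance σ², the alternative μ₁* maximizes, for every data-generating mean, the probability that the Bayes factor against μ₀ exceeds γ; i.e., μ₁* defines the one-sided UMPBT(γ). -/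
open MeasureTheory ProbabilityTheory

/-- for `μ₀ ∈ ℝ`, `σ > 0`, `n ≥ 1`, `γ > 1`, the function
`h(μ₁) = σ² log(γ)/(n(μ₁ − μ₀)) + (μ₀ + μ₁)/2` on `μ₁ > μ₀` attains its unique
minimum at `μ₁* = μ₀ + σ√(2 log γ / n)`, with minimum value `h(μ₁*) = μ₁*`.
Consequently, among all point alternatives `μ₁ > μ₀` for the test of a normal
mean with known variance `σ²`, the alternative `μ₁*` maximizes, for every
data-generating mean `μ_t`, the probability that the Bayes factor against `μ₀`
exceeds `γ`; i.e., `μ₁*` defines the one-sided UMPBT(γ). -/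
theorem stmt_9 (μ₀ σ : ℝ) (hσ : 0 < σ) (n : ℕ) (hn : 1 ≤ n)
    (γ : ℝ) (hγ : 1 < γ)
    (hfun : ℝ → ℝ)
    (hh : ∀ μ₁, hfun μ₁ = σ ^ 2 * Real.log γ / (n * (μ₁ - μ₀)) + (μ₀ + μ₁) / 2)
    (μstar : ℝ) (hμstar : μstar = μ₀ + σ * Real.sqrt (2 * Real.log γ / n))
    (φ : ℝ → ℝ → ℝ)
    (hφ : ∀ y m, φ y m =
      Real.exp (-(y - m) ^ 2 / (2 * σ ^ 2)) / Real.sqrt (2 * Real.pi * σ ^ 2)) :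
    μ₀ < μstar ∧
    (∀ μ₁, μ₀ < μ₁ → hfun μstar ≤ hfun μ₁ ∧ (hfun μ₁ = hfun μstar → μ₁ = μstar)) ∧
    hfun μstar = μstar ∧
    (∀ μt μ₁ : ℝ, μ₀ < μ₁ →
      (Measure.pi fun _ : Fin n => gaussianReal μt (Real.toNNReal (σ ^ 2)))
          {x | γ < ∏ i, φ (x i) μ₁ / φ (x i) μ₀} ≤
        (Measure.pi fun _ : Fin n => gaussianReal μt (Real.toNNReal (σ ^ 2)))
          {x | γ < ∏ i, φ (x i) μstar / φ (x i) μ₀}) := by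
  have hL : 0 < Real.log γ := Real.log_pos hγ
  have hn0 : (0 : ℝ) < n := by exact_mod_cast hn
  have hq : 0 < 2 * Real.log γ / n := by positivity
  obtain ⟨d, hd⟩ : ∃ d, d = σ * Real.sqrt (2 * Real.log γ / n) := ⟨_, rfl⟩
  have hdpos : 0 < d := by
    rw [hd]
    exact mul_pos hσ (Real.sqrt_pos.mpr hq)
  have hd2 : σ ^ 2 * Real.log γ = n * d ^ 2 / 2 := by
    rw [hd, mul_pow, Real.sq_sqrt hq.le]
    field_simp
  rw [← hd] at hμstar
  have key : ∀ m, μ₀ < m → hfun m = μstar + (m - μstar) ^ 2 / (2 * (m - μ₀)) := by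
    intro m hm
    have hm' : m - μ₀ ≠ 0 := (sub_pos.mpr hm).ne'
    rw [hh, hd2, hμstar]
    field_simp
    ring
  have hlt : μ₀ < μstar := by linarith
  have hst : hfun μstar = μstar := by
    rw [key _ hlt]
    simp
  have hmin : ∀ m, μ₀ < m → hfun μstar ≤ hfun m := by
    intro m hm
    have hm' : 0 < m - μ₀ := sub_pos.mpr hm
    rw [hst, key m hm]
    have : 0 ≤ (m - μstar) ^ 2 / (2 * (m - μ₀)) := by positivity
    linarith
  have hBF : ∀ m, μ₀ < m → ∀ x : Fin n → ℝ,
      (γ < ∏ i, φ (x i) m / φ (x i) μ₀ ↔ n * hfun m < ∑ i, x i) := by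
    intro m hm x
    have hm' : 0 < m - μ₀ := sub_pos.mpr hm
    have hs : Real.sqrt (2 * Real.pi * σ ^ 2) ≠ 0 :=
      (Real.sqrt_pos.mpr (by positivity)).ne'
    have h1 : ∀ i, φ (x i) m / φ (x i) μ₀ =
        Real.exp ((m - μ₀) / σ ^ 2 * (x i - (μ₀ + m) / 2)) := by
      intro i
      rw [hφ, hφ, div_div_div_cancel_right₀ hs, ← Real.exp_sub]
      congr 1
      field_simp
      ring
    rw [Finset.prod_congr rfl (fun i _ => h1 i), ← Real.exp_sum, ← Finset.mul_sum,
      Finset.sum_sub_distrib, ← Real.log_lt_iff_lt_exp (by linarith)]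
    simp only [Finset.sum_const, Finset.card_univ, Fintype.card_fin, nsmul_eq_mul]
    have h2 : n * hfun m = Real.log γ / ((m - μ₀) / σ ^ 2) + n * ((μ₀ + m) / 2) := by
      rw [hh]
      field_simp
    rw [h2, ← lt_sub_iff_add_lt, div_lt_iff₀' (by positivity)]
  refine ⟨hlt, fun m hm => ⟨hmin m hm, fun he => ?_⟩, hst, fun μt m hm => ?_⟩
  · have hm' : m - μ₀ ≠ 0 := (sub_pos.mpr hm).ne'
    rw [hst, key m hm] at he
    have h0 : (m - μstar) ^ 2 / (2 * (m - μ₀)) = 0 := by linarith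
    rcases div_eq_zero_iff.mp h0 with h | h
    · exact sub_eq_zero.mp (pow_eq_zero_iff (two_ne_zero)|>.mp h)
    · exact absurd (by linarith) hm'
  · apply measure_mono
    intro x hx
    simp only [Set.mem_setOf_eq] at hx ⊢
    rw [hBF m hm] at hx
    rw [hBF μstar hlt]
    exact lt_of_le_of_lt (mul_le_mul_of_nonneg_left (hmin m hm) hn0.le) hx
end

section
/- Fix μ₀ ∈ ℝ, σ > 0, n ≥ 1, z_α > 0, and γ > 1, and set μ₁ = μ₀ + σ√(2 log γ / n). Then the rejection region of the classical one-sided test, {x̄ : x̄ > μ₀ + z_α σ/√n}, coincides with the rejection region of the UMPBT(γ), {x̄ : x̄ > σ² log(γ)/(n(μ₁ − μ₀)) + (μ₀ + μ₁)/2}, if and only if γ = exp(z_α²/2). Equivalently, the evidence threshold corresponding to a classical one-sided normal test with critical value z_α is γ = exp(z_α²/2). -/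
/-- for `μ₀ ∈ ℝ`, `σ > 0`, `n ≥ 1`, `z_α > 0`, `γ > 1` and
`μ₁ = μ₀ + σ√(2 log γ / n)`, the classical one-sided rejection region
`{x̄ : x̄ > μ₀ + z_α σ/√n}` coincides with the UMPBT(γ) rejection region
`{x̄ : x̄ > σ² log(γ)/(n(μ₁ − μ₀)) + (μ₀ + μ₁)/2}` if and only if
`γ = exp(z_α²/2)`. -/
theorem stmt_11 (μ₀ σ : ℝ) (hσ : 0 < σ) (n : ℕ) (hn : 1 ≤ n)
    (zα : ℝ) (hz : 0 < zα) (γ : ℝ) (hγ : 1 < γ)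
    (μ₁ : ℝ) (hμ₁ : μ₁ = μ₀ + σ * Real.sqrt (2 * Real.log γ / n)) :
    {xbar : ℝ | xbar > μ₀ + zα * σ / Real.sqrt n} =
        {xbar : ℝ | xbar >
          σ ^ 2 * Real.log γ / (n * (μ₁ - μ₀)) + (μ₀ + μ₁) / 2} ↔
      γ = Real.exp (zα ^ 2 / 2) := by
  have hn' : (0 : ℝ) < n := by exact_mod_cast hn
  have hL : 0 < Real.log γ := Real.log_pos hγ
  obtain ⟨t, ht⟩ : ∃ t, t = Real.sqrt (2 * Real.log γ) := ⟨_, rfl⟩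
  obtain ⟨s, hs⟩ : ∃ s, s = Real.sqrt (n : ℝ) := ⟨_, rfl⟩
  have ht0 : 0 < t := by rw [ht]; positivity
  have hs0 : 0 < s := by rw [hs]; positivity
  have ht2 : t ^ 2 = 2 * Real.log γ := by rw [ht]; exact Real.sq_sqrt (by positivity)
  have hs2 : s ^ 2 = (n : ℝ) := by rw [hs]; exact Real.sq_sqrt hn'.le
  have hlog : Real.log γ = t ^ 2 / 2 := by linarith
  have hd : μ₁ = μ₀ + σ * (t / s) := by
    rw [hμ₁, Real.sqrt_div (by positivity), ← ht, ← hs]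
  have hthr : σ ^ 2 * Real.log γ / (n * (μ₁ - μ₀)) + (μ₀ + μ₁) / 2 = μ₀ + t * σ / s := by
    rw [hd, hlog, ← hs2, add_sub_cancel_left]
    field_simp
    ring
  rw [hthr, ← hs]
  change Set.Ioi (μ₀ + zα * σ / s) = Set.Ioi (μ₀ + t * σ / s) ↔ _
  rw [Set.Ioi_inj]
  constructor
  · intro h
    have h1 : zα * σ / s = t * σ / s := by linarith
    have h2 : zα = t := by
      field_simp at h1
      exact h1
    rw [h2, ← hlog, Real.exp_log (by linarith)]
  · intro h
    have h1 : Real.log γ = zα ^ 2 / 2 := by rw [h, Real.log_exp]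
    have h2 : zα = t := by
      have : zα ^ 2 = t ^ 2 := by linarith
      nlinarith
    rw [h2]
end

section
/- Let x ∈ {0,1,…,n} and let 0 < p₀ < p₁ < 1. The binomial Bayes factor BF₁₀(x) = [p₁^x (1−p₁)^{n−x}] / [p₀^x (1−p₀)^{n−x}] between the point hypotheses p = p₁ and p = p₀ satisfies, for any γ > 0: BF₁₀(x) > γ if and only if x > [log γ − n log((1−p₁)/(1−p₀))] / log[ p₁(1−p₀) / ((1−p₁)p₀) ]. Consequently, the UMPBT(γ) for the one-sided test p > p₀ is obtained by choosing p₁ to minimize this threshold over p ∈ (p₀, 1). -/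
/-- The threshold characterization of the binomial Bayes factor event. -/
theorem bf_gt_iff (n x : ℕ) (hx : x ≤ n) (p₀ p₁ : ℝ)
    (h0 : 0 < p₀) (h01 : p₀ < p₁) (h1 : p₁ < 1) (γ : ℝ) (hγ : 0 < γ) :
    (p₁ ^ x * (1 - p₁) ^ (n - x) / (p₀ ^ x * (1 - p₀) ^ (n - x)) > γ ↔
      (x : ℝ) > (Real.log γ - n * Real.log ((1 - p₁) / (1 - p₀))) /
        Real.log (p₁ * (1 - p₀) / ((1 - p₁) * p₀))) := by
  have hp1 : 0 < p₁ := h0.trans h01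
  have hq1 : 0 < 1 - p₁ := by linarith
  have hq0 : 0 < 1 - p₀ := by linarith
  have hL : 0 < Real.log (p₁ * (1 - p₀) / ((1 - p₁) * p₀)) := by
    apply Real.log_pos
    rw [one_lt_div (by positivity)]
    nlinarith
  rw [gt_iff_lt, gt_iff_lt, div_lt_iff₀ hL, ← Real.log_lt_log_iff hγ (by positivity),
    Real.log_div (by positivity) (by positivity), Real.log_mul (by positivity) (by positivity),
    Real.log_mul (by positivity) (by positivity), Real.log_div (by positivity) (by positivity),
    Real.log_div (by positivity) (by positivity), Real.log_mul (by positivity) (by positivity),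
    Real.log_mul (by positivity) (by positivity)]
  simp only [Real.log_pow]
  rw [Nat.cast_sub hx]
  constructor <;> intro h <;> nlinarith

/-- for `x ∈ {0,…,n}` and `0 < p₀ < p₁ < 1`, the binomial Bayes
factor `BF₁₀(x) = p₁^x(1−p₁)^{n−x} / (p₀^x(1−p₀)^{n−x})` exceeds `γ > 0` iff
`x > [log γ − n log((1−p₁)/(1−p₀))] / log[p₁(1−p₀)/((1−p₁)p₀)]`.
Consequently, the UMPBT(γ) for the one-sided test `p > p₀` is obtained by
choosing `p₁` minimizing this threshold over `(p₀, 1)`: any such minimizer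
`p*` maximizes, for every data-generating success probability `p_t`, the
binomial probability that the Bayes factor exceeds `γ`. -/
theorem stmt_12 (n x : ℕ) (hx : x ≤ n) (p₀ p₁ : ℝ)
    (h0 : 0 < p₀) (h01 : p₀ < p₁) (h1 : p₁ < 1) (γ : ℝ) (hγ : 0 < γ) :
    (p₁ ^ x * (1 - p₁) ^ (n - x) / (p₀ ^ x * (1 - p₀) ^ (n - x)) > γ ↔
      (x : ℝ) > (Real.log γ - n * Real.log ((1 - p₁) / (1 - p₀))) /
        Real.log (p₁ * (1 - p₀) / ((1 - p₁) * p₀))) ∧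
    (∀ pstar ∈ Set.Ioo p₀ 1,
      (∀ p ∈ Set.Ioo p₀ 1,
        (Real.log γ - n * Real.log ((1 - pstar) / (1 - p₀))) /
            Real.log (pstar * (1 - p₀) / ((1 - pstar) * p₀)) ≤
          (Real.log γ - n * Real.log ((1 - p) / (1 - p₀))) /
            Real.log (p * (1 - p₀) / ((1 - p) * p₀))) →
      ∀ pt ∈ Set.Icc (0 : ℝ) 1, ∀ p ∈ Set.Ioo p₀ 1,
        (∑ k ∈ Finset.range (n + 1),
          if p ^ k * (1 - p) ^ (n - k) / (p₀ ^ k * (1 - p₀) ^ (n - k)) > γ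
            then (n.choose k : ℝ) * pt ^ k * (1 - pt) ^ (n - k) else 0) ≤
        ∑ k ∈ Finset.range (n + 1),
          if pstar ^ k * (1 - pstar) ^ (n - k) /
              (p₀ ^ k * (1 - p₀) ^ (n - k)) > γ
            then (n.choose k : ℝ) * pt ^ k * (1 - pt) ^ (n - k) else 0) := by
  refine ⟨bf_gt_iff n x hx p₀ p₁ h0 h01 h1 γ hγ, ?_⟩
  intro ps hps hmin pt hpt p hp
  apply Finset.sum_le_sum
  intro k hk
  have hkn : k ≤ n := by
    have := Finset.mem_range.mp hk
    omega
  have ht0 : 0 ≤ pt := hpt.1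
  have ht1 : 0 ≤ 1 - pt := by linarith [hpt.2]
  have hnn : 0 ≤ (n.choose k : ℝ) * pt ^ k * (1 - pt) ^ (n - k) := by positivity
  by_cases h : p ^ k * (1 - p) ^ (n - k) / (p₀ ^ k * (1 - p₀) ^ (n - k)) > γ
  · have h' : ps ^ k * (1 - ps) ^ (n - k) / (p₀ ^ k * (1 - p₀) ^ (n - k)) > γ := by
      rw [bf_gt_iff n k hkn p₀ ps h0 hps.1 hps.2 γ hγ]
      exact lt_of_le_of_lt (hmin p hp)
        ((bf_gt_iff n k hkn p₀ p h0 hp.1 hp.2 γ hγ).mp h)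
    rw [if_pos h, if_pos h']
  · rw [if_neg h]
    split_ifs
    · exact hnn
    · exact le_refl _
end

section
/- Let X be an n×p real matrix of full column rank with p-th column x_p, let X₋ₚ consist of the first p−1 columns of X, let S be a symmetric positive definite (p−1)×(p−1) matrix, and set F = X₋ₚᵀX₋ₚ + S⁻¹ and H = X₋ₚ F⁻¹ X₋ₚᵀ. Suppose c := x_pᵀ(Iₙ − H)x_p > 0, and fix σ² > 0 and γ > 1. Then the threshold function t(β) = σ² log(γ)/β + (β/2)c, defined for β > 0, attains its unique minimum at β* = √(2σ² log γ / c), with minimum value t(β*) = √(2σ² c log γ). Consequently, for any random vector y in ℝⁿ and any β > 0, P[ x_pᵀ(Iₙ − H)y > t(β) ] ≤ P[ x_pᵀ(Iₙ − H)y > t(β*) ]; i.e., the point alternative β_p = β* maximizes the probability that the Bayes factor for the regression coefficient test exceeds γ, uniformly over the distribution generating y. -/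
open MeasureTheory Matrix

/-- let `X` be an `n×p` real matrix of full column rank
(`p = m+1`) with last column `x_p`, let `X₋ₚ` be its first `p−1` columns, let
`S` be symmetric positive definite, `F = X₋ₚᵀX₋ₚ + S⁻¹`, `H = X₋ₚF⁻¹X₋ₚᵀ`, and
suppose `c = x_pᵀ(Iₙ − H)x_p > 0`.  For `σ² = v > 0` and `γ > 1`, the threshold
`t(β) = σ² log(γ)/β + (β/2)c` on `β > 0` attains its unique minimum at
`β* = √(2σ² log γ / c)`, with value `t(β*) = √(2σ² c log γ)`.  Consequently,
for any random vector `y` in `ℝⁿ` (any law `P`) and any `β > 0`,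
`P[x_pᵀ(Iₙ − H)y > t(β)] ≤ P[x_pᵀ(Iₙ − H)y > t(β*)]`. -/
theorem stmt_18 (n m : ℕ) (Xm : Matrix (Fin n) (Fin (m + 1)) ℝ)
    (hrank : Xm.rank = m + 1)
    (S : Matrix (Fin m) (Fin m) ℝ) (hS : S.PosDef)
    (Xp : Matrix (Fin n) (Fin m) ℝ) (hXp : Xp = Xm.submatrix id Fin.castSucc)
    (xp : Fin n → ℝ) (hxp : xp = fun i => Xm i (Fin.last m))
    (F : Matrix (Fin m) (Fin m) ℝ) (hF : F = Xpᵀ * Xp + S⁻¹)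
    (H : Matrix (Fin n) (Fin n) ℝ) (hH : H = Xp * F⁻¹ * Xpᵀ)
    (c : ℝ) (hc : c = xp ⬝ᵥ (1 - H).mulVec xp) (hcpos : 0 < c)
    (v γ : ℝ) (hv : 0 < v) (hγ : 1 < γ)
    (t : ℝ → ℝ) (ht : ∀ β, t β = v * Real.log γ / β + β / 2 * c)
    (βstar : ℝ) (hβ : βstar = Real.sqrt (2 * v * Real.log γ / c)) :
    (∀ β, 0 < β → t βstar ≤ t β ∧ (t β = t βstar → β = βstar)) ∧
    t βstar = Real.sqrt (2 * v * c * Real.log γ) ∧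
    (∀ (P : Measure (Fin n → ℝ)) (β : ℝ), 0 < β →
      P {y | t β < xp ⬝ᵥ (1 - H).mulVec y} ≤
        P {y | t βstar < xp ⬝ᵥ (1 - H).mulVec y}) := by
  have hL : 0 < Real.log γ := Real.log_pos hγ
  have hb : 0 < βstar := by rw [hβ]; positivity
  have hsq : βstar ^ 2 = 2 * v * Real.log γ / c := by
    rw [hβ]; exact Real.sq_sqrt (by positivity)
  have hvl : v * Real.log γ = βstar ^ 2 * c / 2 := by
    rw [hsq]; field_simp
  have htb : t βstar = βstar * c := by
    rw [ht, hvl]; field_simp; ring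
  have hdiff : ∀ β, 0 < β → t β - t βstar = c / (2 * β) * (β - βstar) ^ 2 := by
    intro β h
    rw [htb, ht, hvl]; field_simp; ring
  have hmin : ∀ β, 0 < β → t βstar ≤ t β := by
    intro β h
    have h1 := hdiff β h
    have h2 : 0 ≤ c / (2 * β) * (β - βstar) ^ 2 := by positivity
    linarith
  refine ⟨fun β h => ⟨hmin β h, fun he => ?_⟩, ?_, fun P β h => ?_⟩
  · have h1 := hdiff β h
    rw [he, sub_self] at h1
    have h2 : c / (2 * β) ≠ 0 := by positivity
    have h3 : (β - βstar) ^ 2 = 0 := by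
      rcases mul_eq_zero.mp h1.symm with h4 | h4
      · exact absurd h4 h2
      · exact h4
    have h5 := pow_eq_zero_iff (two_ne_zero) |>.mp h3
    linarith
  · rw [htb]
    have h1 : 2 * v * c * Real.log γ = (βstar * c) ^ 2 := by
      have h2 : 2 * v * c * Real.log γ = 2 * c * (v * Real.log γ) := by ring
      rw [h2, hvl]; ring
    rw [h1, Real.sqrt_sq (by positivity)]
  · exact measure_mono fun y hy => lt_of_le_of_lt (hmin β h) hy
end
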